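/- Lemma 5.1, y-part: in the field ℂ(y0,...,y5), write v2(y) = Σ_{i=1}^{6} Yi·bi + Σ_{i=1}^{6} Yi'·bi' + Y01·c1 + Y02·c2 + Y∅·u. Then Y1 = y1y3; Y2 = y2^3(y1y3 + y4^3)/y1; Y3 = y2^2y3 + y2y4^2 + y2^2y4^3/y1; Y4 = y2y3 + y1y4/y2 + 2y4^2 + y2y4^3/y1; Y5 = y2^2y4; Y6 = y3 + 3y1y4/y2^2 + 3y4^2/y2 + y4^3/y1 + y1^2(y4^3 + y3^2y5)/(y2^3y4^3); Y01 = y2y4; Y02 = y1 + (y3 + y1y3^2/y4^3)y5; Y6' = y2^3 + y0(y2^3/y1 + y2^3y4^3/(y1^2y3)) + (2y2^3y3/y1 + y2^3y3^2/y4^3 + y2^3y4^3/y1^2)y5; Y5' = y1/y2 + y4 + (y3(1/y2 + y1/(y2^2y4)) + y1y3^2/(y2y4^3))y5; Y4' = y2^2 + y0(y2^2/y1 + y2y4^2/(y1y3) + y2^2y4^3/(y1^2y3)) + (y3(2y2^2/y1 + y2/y4) + y2^2y3^2/y4^3 + y2y4^2/y1 + y2^2y4^3/y1^2)y5; Y3'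 = y2 + y0(y2/y1 + y4/(y2y3) + 2y4^2/(y1y3) + y2y4^3/(y1^2y3)) + (y3(2y2/y1 + 2/y4) + y2y3^2/y4^3 + y4/y2 + 2y4^2/y1 + y2y4^3/y1^2)y5; Y2' = 1 + y0(1/y1 + y1/(y2^3y3) + 3y4/(y2^2y3) + 3y4^2/(y1y2y3) + y4^3/(y1^2y3)) + (y1/y2^3 + y3(2/y1 + 3/(y2y4)) + y0y1y3/(y2^3y4^3) + y3^2/y4^3 + 3y4/y2^2 + 3y4^2/(y1y2) + y4^3/y1^2)y5; Y1' = y0^2/(y1y3) + y5 + y0(1/y3 + y5/y1 + y3y5/y4^3); Y∅ = y0. -/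

import Mathlib

noncomputable section

/-- The 15-dimensional space: basis indices 0..5 = b1..b6, 6..11 = b1'..b6',
12 = c1, 13 = c2, 14 = u. -/
abbrev VK (K : Type*) := Fin 15 → K

variable {K : Type*} [Field K]

def f0op (v : VK K) : VK K :=
  ![v 13 + 2*v 14, v 11, v 9, v 8, 0, v 7, 0, 0, 0, 0, 0, 0, 0, 0, v 6]

def f1op (v : VK K) : VK K :=
  ![0, v 0, 0, 0, v 3, 0, v 7, 0, 0, v 10, 0, 3*v 12 + 2*v 13 + v 14, 0, v 5, 0]

def f2op (v : VK K) : VK K :=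
  ![0, 0, v 1, 2*v 2, 0, 3*v 3, 0, 3*v 8, 2*v 9, v 11, 2*v 12 + v 13, 0, v 4, 0, 0]

def wtv : Fin 15 → Fin 3 → ℤ :=
  ![![-2,1,0], ![-1,-1,3], ![-1,0,1], ![-1,1,-1], ![0,-1,2], ![-1,2,-3],
    ![2,-1,0], ![1,1,-3], ![1,0,-1], ![1,-1,1], ![0,1,-2], ![1,-2,3],
    ![0,0,0], ![0,0,0], ![0,0,0]]

/-- the diagonal operator `αi^∨(c)`, multiplying a basis vector `b` by `c^(wt(b)_i)`. -/
def alphaop (i : Fin 3) (c : K) (v : VK K) : VK K := fun k => c ^ (wtv k i) * v k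

/-- `Y_0(c) = (1 + f0/c + f0^2/(2c^2)) ∘ α0^∨(c)` -/
def Y0op (c : K) (v : VK K) : VK K :=
  fun k => alphaop 0 c v k + f0op (alphaop 0 c v) k / c + f0op (f0op (alphaop 0 c v)) k / (2*c^2)

/-- `Y_1(c) = (1 + f1/c + f1^2/(2c^2)) ∘ α1^∨(c)` -/
def Y1op (c : K) (v : VK K) : VK K :=
  fun k => alphaop 1 c v k + f1op (alphaop 1 c v) k / c + f1op (f1op (alphaop 1 c v)) k / (2*c^2)

/-- `Y_2(c) = (1 + f2/c + f2^2/(2c^2) + f2^3/(6c^3)) ∘ α2^∨(c)` -/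
def Y2op (c : K) (v : VK K) : VK K :=
  fun k => alphaop 2 c v k + f2op (alphaop 2 c v) k / c + f2op (f2op (alphaop 2 c v)) k / (2*c^2)
    + f2op (f2op (f2op (alphaop 2 c v))) k / (6*c^3)

/-- `v1(x) = Y_0(x0)Y_1(x1)Y_2(x2)Y_1(x3)Y_2(x4)Y_1(x5)·b1` -/
def v1vec (x0 x1 x2 x3 x4 x5 : K) : VK K :=
  Y0op x0 (Y1op x1 (Y2op x2 (Y1op x3 (Y2op x4 (Y1op x5 (Pi.single 0 1))))))

/-- `v2(y) = Y_2(y2)Y_1(y1)Y_2(y4)Y_1(y3)Y_0(y0)Y_1(y5)·b2'` -/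
def v2vec (y0 y1 y2 y3 y4 y5 : K) : VK K :=
  Y2op y2 (Y1op y1 (Y2op y4 (Y1op y3 (Y0op y0 (Y1op y5 (Pi.single 7 1))))))

end

/-!
Each `f_i` is nilpotent, and its divided powers have small integer coefficients: `f0 ^ 2 / 2` and
`f1 ^ 2 / 2` each move a single coordinate, and `f2 ^ 3 / 6` moves two. Hence `Y_i(c)` is an
explicit matrix of Laurent monomials in `c` over any field in which `2` and `3` are invertible.
Applied to `b2'`, the factors `Y_1(y3) Y_0(y0) Y_1(y5)` produce a sparse vector; the long
coefficients come from the remaining factors `Y_2(y2) Y_1(y1) Y_2(y4)`.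
-/

section

variable {K : Type*} [Field K]

lemma f0op_f0op (v : VK K) :
    f0op (f0op v) = ![2 * v 6, 0, 0, 0, 0, 0, 0, 0, 0, 0, 0, 0, 0, 0, 0] := by
  simp [f0op]

lemma f1op_f1op (v : VK K) :
    f1op (f1op v) = ![0, 0, 0, 0, 0, 0, 0, 0, 0, 0, 0, 2 * v 5, 0, 0, 0] := by
  simp [f1op]

lemma f2op_f2op (v : VK K) :
    f2op (f2op v) =
      ![0, 0, 0, 2 * v 1, 0, 6 * v 2, 0, 6 * v 9, 2 * v 11, 0, 2 * v 4, 0, 0, 0, 0] := by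
  funext k
  fin_cases k <;> simp [f2op] <;> ring

lemma f2op_f2op_f2op (v : VK K) :
    f2op (f2op (f2op v)) = ![0, 0, 0, 0, 0, 6 * v 1, 0, 6 * v 11, 0, 0, 0, 0, 0, 0, 0] := by
  rw [f2op_f2op]
  simp [f2op]

lemma Y0op_eq [NeZero (2 : K)] {c : K} (hc : c ≠ 0) (v : VK K) :
    Y0op c v =
      ![v 0 / c ^ 2 + (v 13 + 2 * v 14) / c + v 6, v 1 / c + v 11, v 2 / c + v 9,
        v 3 / c + v 8, v 4, v 5 / c + v 7, c ^ 2 * v 6, c * v 7, c * v 8, c * v 9,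
        v 10, c * v 11, v 12, v 13, v 14 + c * v 6] := by
  funext k
  simp only [Y0op, f0op_f0op]
  fin_cases k <;> simp [f0op, alphaop, wtv, zpow_neg] <;> field

lemma Y1op_eq [NeZero (2 : K)] {c : K} (hc : c ≠ 0) (v : VK K) :
    Y1op c v =
      ![c * v 0, v 1 / c + v 0, v 2, c * v 3, v 4 / c + v 3, c ^ 2 * v 5,
        v 6 / c + v 7, c * v 7, v 8, v 9 / c + v 10, c * v 10,
        v 11 / c ^ 2 + (3 * v 12 + 2 * v 13 + v 14) / c + v 5, v 12, v 13 + c * v 5,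
        v 14] := by
  funext k
  simp only [Y1op, f1op_f1op]
  fin_cases k <;> simp [f1op, alphaop, wtv, zpow_neg] <;> field

lemma Y2op_eq [NeZero (2 : K)] [NeZero (3 : K)] {c : K} (hc : c ≠ 0) (v : VK K) :
    Y2op c v =
      ![v 0, c ^ 3 * v 1, c * v 2 + c ^ 2 * v 1, v 3 / c + 2 * v 2 + c * v 1,
        c ^ 2 * v 4, v 5 / c ^ 3 + 3 * v 3 / c ^ 2 + 3 * v 2 / c + v 1, v 6,
        v 7 / c ^ 3 + 3 * v 8 / c ^ 2 + 3 * v 9 / c + v 11,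
        v 8 / c + 2 * v 9 + c * v 11, c * v 9 + c ^ 2 * v 11,
        v 10 / c ^ 2 + (2 * v 12 + v 13) / c + v 4, c ^ 3 * v 11, v 12 + c * v 4, v 13,
        v 14] := by
  have six_ne : (6 : K) ≠ 0 := by
    rw [show (6 : K) = 2 * 3 by norm_num]
    exact mul_ne_zero two_ne_zero three_ne_zero
  funext k
  rw [Y2op, f2op_f2op_f2op, f2op_f2op]
  fin_cases k <;> simp [f2op, alphaop, wtv, zpow_neg] <;> field

lemma Y0op_Y1op_single [NeZero (2 : K)] {y0 y5 : K} (h0 : y0 ≠ 0) (h5 : y5 ≠ 0) :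
    Y0op y0 (Y1op y5 (Pi.single 7 1)) =
      ![1, 0, 0, 0, 0, y5, y0 ^ 2, y0 * y5, 0, 0, 0, 0, 0, 0, y0] := by
  rw [Y1op_eq h5, Y0op_eq h0]
  simp

lemma Y1op_Y0op_Y1op_single [NeZero (2 : K)] {y0 y3 y5 : K}
    (h0 : y0 ≠ 0) (h3 : y3 ≠ 0) (h5 : y5 ≠ 0) :
    Y1op y3 (Y0op y0 (Y1op y5 (Pi.single 7 1))) =
      ![y3, 1, 0, 0, 0, y3 ^ 2 * y5, y0 ^ 2 / y3 + y0 * y5, y3 * (y0 * y5), 0, 0, 0,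
        y0 / y3 + y5, 0, y3 * y5, y0] := by
  rw [Y0op_Y1op_single h0 h5, Y1op_eq h3]
  simp

lemma Y2op_Y1op_Y0op_Y1op_single [NeZero (2 : K)] [NeZero (3 : K)] {y0 y3 y4 y5 : K}
    (h0 : y0 ≠ 0) (h3 : y3 ≠ 0) (h4 : y4 ≠ 0) (h5 : y5 ≠ 0) :
    Y2op y4 (Y1op y3 (Y0op y0 (Y1op y5 (Pi.single 7 1)))) =
      ![y3, y4 ^ 3, y4 ^ 2, y4, 0, y3 ^ 2 * y5 / y4 ^ 3 + 1, y0 ^ 2 / y3 + y0 * y5,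
        y3 * (y0 * y5) / y4 ^ 3 + (y0 / y3 + y5), y4 * (y0 / y3 + y5), y4 ^ 2 * (y0 / y3 + y5),
        y3 * y5 / y4, y4 ^ 3 * (y0 / y3 + y5), 0, y3 * y5, y0] := by
  rw [Y1op_Y0op_Y1op_single h0 h3 h5, Y2op_eq h4]
  simp

lemma Y1op_Y2op_Y1op_Y0op_Y1op_single [NeZero (2 : K)] [NeZero (3 : K)] {y0 y1 y3 y4 y5 : K}
    (h0 : y0 ≠ 0) (h1 : y1 ≠ 0) (h3 : y3 ≠ 0) (h4 : y4 ≠ 0) (h5 : y5 ≠ 0) :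
    Y1op y1 (Y2op y4 (Y1op y3 (Y0op y0 (Y1op y5 (Pi.single 7 1))))) =
      ![y1 * y3, y4 ^ 3 / y1 + y3, y4 ^ 2, y1 * y4, y4, y1 ^ 2 * (y3 ^ 2 * y5 / y4 ^ 3 + 1),
        y0 ^ 2 / (y1 * y3) + y5 + y0 * (1 / y3 + y5 / y1 + y3 * y5 / y4 ^ 3),
        y1 * (y3 * (y0 * y5) / y4 ^ 3 + (y0 / y3 + y5)), y4 * (y0 / y3 + y5),
        y4 ^ 2 * (y0 / y3 + y5) / y1 + y3 * y5 / y4, y1 * y3 * y5 / y4,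
        y4 ^ 3 * (y0 / y3 + y5) / y1 ^ 2 + (2 * y3 * y5 + y0) / y1 + y3 ^ 2 * y5 / y4 ^ 3 + 1,
        0, y1 + (y3 + y1 * y3 ^ 2 / y4 ^ 3) * y5, y0] := by
  rw [Y2op_Y1op_Y0op_Y1op_single h0 h3 h4 h5, Y1op_eq h1]
  simp only [Matrix.cons_val, Matrix.vecCons_inj, true_and, and_true]
  split_ands <;> field

theorem v2_coefficients_general [NeZero (2 : K)] [NeZero (3 : K)] {y0 y1 y2 y3 y4 y5 : K}
    (h0 : y0 ≠ 0) (h1 : y1 ≠ 0) (h2 : y2 ≠ 0) (h3 : y3 ≠ 0) (h4 : y4 ≠ 0) (h5 : y5 ≠ 0) :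
    v2vec y0 y1 y2 y3 y4 y5 =
      ![y1*y3,
        y2^3*(y1*y3 + y4^3)/y1,
        y2^2*y3 + y2*y4^2 + y2^2*y4^3/y1,
        y2*y3 + y1*y4/y2 + 2*y4^2 + y2*y4^3/y1,
        y2^2*y4,
        y3 + 3*y1*y4/y2^2 + 3*y4^2/y2 + y4^3/y1 + y1^2*(y4^3 + y3^2*y5)/(y2^3*y4^3),
        y0^2/(y1*y3) + y5 + y0*(1/y3 + y5/y1 + y3*y5/y4^3),
        1 + y0*(1/y1 + y1/(y2^3*y3) + 3*y4/(y2^2*y3) + 3*y4^2/(y1*y2*y3) + y4^3/(y1^2*y3))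
          + (y1/y2^3 + y3*(2/y1 + 3/(y2*y4)) + y0*y1*y3/(y2^3*y4^3) + y3^2/y4^3
              + 3*y4/y2^2 + 3*y4^2/(y1*y2) + y4^3/y1^2)*y5,
        y2 + y0*(y2/y1 + y4/(y2*y3) + 2*y4^2/(y1*y3) + y2*y4^3/(y1^2*y3))
          + (y3*(2*y2/y1 + 2/y4) + y2*y3^2/y4^3 + y4/y2 + 2*y4^2/y1 + y2*y4^3/y1^2)*y5,
        y2^2 + y0*(y2^2/y1 + y2*y4^2/(y1*y3) + y2^2*y4^3/(y1^2*y3))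
          + (y3*(2*y2^2/y1 + y2/y4) + y2^2*y3^2/y4^3 + y2*y4^2/y1 + y2^2*y4^3/y1^2)*y5,
        y1/y2 + y4 + (y3*(1/y2 + y1/(y2^2*y4)) + y1*y3^2/(y2*y4^3))*y5,
        y2^3 + y0*(y2^3/y1 + y2^3*y4^3/(y1^2*y3))
          + (2*y2^3*y3/y1 + y2^3*y3^2/y4^3 + y2^3*y4^3/y1^2)*y5,
        y2*y4,
        y1 + (y3 + y1*y3^2/y4^3)*y5,
        y0] := by
  rw [v2vec, Y1op_Y2op_Y1op_Y0op_Y1op_single h0 h1 h3 h4 h5, Y2op_eq h2]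
  simp only [Matrix.cons_val, Matrix.vecCons_inj, true_and, and_true]
  split_ands <;> field

end

/-- Lemma 5.1, `y`-part: the coefficients of `v2(y)` in the basis
`(b1,...,b6,b1',...,b6',c1,c2,u)`. -/
theorem v2_coefficients (y0 y1 y2 y3 y4 y5 : ℂ)
    (h0 : y0 ≠ 0) (h1 : y1 ≠ 0) (h2 : y2 ≠ 0) (h3 : y3 ≠ 0) (h4 : y4 ≠ 0) (h5 : y5 ≠ 0) :
    v2vec y0 y1 y2 y3 y4 y5 =
      ![y1*y3,
        y2^3*(y1*y3 + y4^3)/y1,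
        y2^2*y3 + y2*y4^2 + y2^2*y4^3/y1,
        y2*y3 + y1*y4/y2 + 2*y4^2 + y2*y4^3/y1,
        y2^2*y4,
        y3 + 3*y1*y4/y2^2 + 3*y4^2/y2 + y4^3/y1 + y1^2*(y4^3 + y3^2*y5)/(y2^3*y4^3),
        y0^2/(y1*y3) + y5 + y0*(1/y3 + y5/y1 + y3*y5/y4^3),
        1 + y0*(1/y1 + y1/(y2^3*y3) + 3*y4/(y2^2*y3) + 3*y4^2/(y1*y2*y3) + y4^3/(y1^2*y3))
          + (y1/y2^3 + y3*(2/y1 + 3/(y2*y4)) + y0*y1*y3/(y2^3*y4^3) + y3^2/y4^3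
              + 3*y4/y2^2 + 3*y4^2/(y1*y2) + y4^3/y1^2)*y5,
        y2 + y0*(y2/y1 + y4/(y2*y3) + 2*y4^2/(y1*y3) + y2*y4^3/(y1^2*y3))
          + (y3*(2*y2/y1 + 2/y4) + y2*y3^2/y4^3 + y4/y2 + 2*y4^2/y1 + y2*y4^3/y1^2)*y5,
        y2^2 + y0*(y2^2/y1 + y2*y4^2/(y1*y3) + y2^2*y4^3/(y1^2*y3))
          + (y3*(2*y2^2/y1 + y2/y4) + y2^2*y3^2/y4^3 + y2*y4^2/y1 + y2^2*y4^3/y1^2)*y5,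
        y1/y2 + y4 + (y3*(1/y2 + y1/(y2^2*y4)) + y1*y3^2/(y2*y4^3))*y5,
        y2^3 + y0*(y2^3/y1 + y2^3*y4^3/(y1^2*y3))
          + (2*y2^3*y3/y1 + y2^3*y3^2/y4^3 + y2^3*y4^3/y1^2)*y5,
        y2*y4,
        y1 + (y3 + y1*y3^2/y4^3)*y5,
        y0] :=
  v2_coefficients_general h0 h1 h2 h3 h4 h5
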